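/- Let d ≥ 1 and let Δ ⊂ ℝ^d be the standard d-simplex with barycentric coordinates λ₀,…,λ_d and element bubble b = Π_{i=0}^d λ_i. The bilinear form (p, q) ↦ ∫_Δ b p q is an inner product on the (d+1)-dimensional space of affine functions ℝ^d → ℝ, and consequently there exist unique affine functions ψ₀,…,ψ_d : ℝ^d → ℝ such that ∫_Δ b ψ_i λ_j = δ_{ij} for all 0 ≤ i, j ≤ d. In particular the functions φ*_i := ψ_i b satisfy the bi-orthogonality relations ∫_Δ φ*_i λ_j = δ_{ij}. -/

import Mathlib

open MeasureTheory Metric Set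
open scoped ENNReal RealInnerProductSpace NNReal Classical

noncomputable section

abbrev Euc (d : ℕ) : Type := EuclideanSpace ℝ (Fin d)

/-- `T(ω)`: Lipschitz functions on `ℝ^d` vanishing identically outside `ω`. -/
def IsTest {d : ℕ} (ω : Set (Euc d)) (φ : Euc d → ℝ) : Prop :=
  (∃ L : ℝ≥0, LipschitzWith L φ) ∧ ∀ x ∉ ω, φ x = 0

/-- `∫_ω |∇φ|²`. -/
def gradSq {d : ℕ} (ω : Set (Euc d)) (φ : Euc d → ℝ) : ℝ :=
  ∫ x in ω, ‖gradient φ x‖ ^ 2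

/-- `∫_ω φ²`. -/
def sqIntg {d : ℕ} (ω : Set (Euc d)) (φ : Euc d → ℝ) : ℝ :=
  ∫ x in ω, (φ x) ^ 2

/-- squared energy norm `‖φ‖_{E,ω}² = ∫_ω |∇φ|² + κ² ∫_ω φ²`. -/
def energySq {d : ℕ} (κ : ℝ) (ω : Set (Euc d)) (φ : Euc d → ℝ) : ℝ :=
  gradSq ω φ + κ ^ 2 * sqIntg ω φ

/-- local dual norm `‖Λ‖_{*,ω} = sup {Λφ : φ ∈ T(ω), ‖φ‖_{E,ω} ≤ 1}`. -/
def dualNorm {d : ℕ} (κ : ℝ) (ω : Set (Euc d)) (Λ : (Euc d → ℝ) → ℝ) : ℝ≥0∞ :=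
  ⨆ φ ∈ {φ : Euc d → ℝ | IsTest ω φ ∧ energySq κ ω φ ≤ 1}, ENNReal.ofReal (Λ φ)

/-- inradius: supremum of radii of balls contained in `s`. -/
def inradius {d : ℕ} (s : Set (Euc d)) : ℝ :=
  sSup {r : ℝ | ∃ c, Metric.ball c r ⊆ s}

/-- the simplex spanned by an affine basis. -/
def simT {d : ℕ} (B : AffineBasis (Fin (d+1)) ℝ (Euc d)) : Set (Euc d) :=
  convexHull ℝ (Set.range ⇑B)

/-- the face of the simplex opposite to the vertex `z`. -/
def simFace {d : ℕ} (B : AffineBasis (Fin (d+1)) ℝ (Euc d)) (z : Fin (d+1)) : Set (Euc d) :=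
  convexHull ℝ (⇑B '' {y | y ≠ z})

/-- the standard `d`-simplex. -/
def Δstd (d : ℕ) : Set (Euc d) := {x | (∀ i, 0 ≤ x i) ∧ ∑ i, x i ≤ 1}

/-- the element bubble of the standard simplex. -/
def elemBubble (d : ℕ) (x : Euc d) : ℝ := (1 - ∑ i, x i) * ∏ i, x i

/-- the barycentric coordinates of the standard `d`-simplex:
`λ₀ = 1 − Σᵢ xᵢ` and `λᵢ(x) = xᵢ` for `1 ≤ i ≤ d`. -/
def bary (d : ℕ) : Fin (d + 1) → Euc d → ℝ :=
  Fin.cases (fun x => 1 - ∑ i, x i) (fun i x => x i)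

lemma isClosed_Dstd (d : ℕ) : IsClosed (Δstd d) := by
  unfold Δstd
  rw [Set.setOf_and]
  apply IsClosed.inter
  · rw [Set.setOf_forall]
    exact isClosed_iInter fun i => isClosed_le continuous_const (by fun_prop)
  · exact isClosed_le (by fun_prop) continuous_const

lemma isCompact_Dstd (d : ℕ) : IsCompact (Δstd d) := by
  apply Metric.isCompact_of_isClosed_isBounded (isClosed_Dstd d)
  rw [isBounded_iff_forall_norm_le]
  refine ⟨√ (∑ i : Fin d, (1:ℝ)), fun x hx => ?_⟩
  rw [EuclideanSpace.norm_eq]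
  apply Real.sqrt_le_sqrt
  apply Finset.sum_le_sum
  intro i _
  have h0 := hx.1 i
  have h1 : x i ≤ 1 := (Finset.single_le_sum (f := fun i => x i) (fun j _ => hx.1 j)
    (Finset.mem_univ i)).trans hx.2
  rw [Real.norm_eq_abs, sq_abs]
  nlinarith

lemma cont_bubble (d : ℕ) : Continuous (elemBubble d) := by
  unfold elemBubble; fun_prop

lemma integrable_of_cont (d : ℕ) {f : Euc d → ℝ} (hf : Continuous f) :
    IntegrableOn f (Δstd d) := hf.continuousOn.integrableOn_compact (isCompact_Dstd d)

def openD (d : ℕ) : Set (Euc d) := {x | (∀ i, 0 < x i) ∧ ∑ i, x i < 1}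

lemma isOpen_openD (d : ℕ) : IsOpen (openD d) := by
  unfold openD
  rw [Set.setOf_and]
  apply IsOpen.inter
  · rw [Set.setOf_forall]
    exact isOpen_iInter_of_finite fun i => isOpen_lt continuous_const (by fun_prop)
  · exact isOpen_lt (by fun_prop) continuous_const

lemma openD_nonempty (d : ℕ) : (openD d).Nonempty := by
  refine ⟨WithLp.toLp 2 fun _ => 1 / ((d:ℝ) + 1), fun i => ?_, ?_⟩
  · simp only []; positivity
  · simp only [Finset.sum_const, Finset.card_univ, Fintype.card_fin, nsmul_eq_mul]
    rw [mul_one_div, div_lt_one (by positivity)]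
    linarith

lemma affine_cont {d : ℕ} (v : Euc d →ᵃ[ℝ] ℝ) : Continuous v :=
  v.continuous_of_finiteDimensional

lemma bubble_pos {d : ℕ} (v : Euc d →ᵃ[ℝ] ℝ) (hv : v ≠ 0) :
    0 < ∫ x in Δstd d, elemBubble d x * (v x) ^ 2 := by
  have hc : Continuous fun x => elemBubble d x * (v x) ^ 2 :=
    (cont_bubble d).mul ((affine_cont v).pow 2)
  rw [setIntegral_pos_iff_support_of_nonneg_ae ?_ (integrable_of_cont d hc)]
  · have hopen : IsOpen (openD d ∩ {x | v x ≠ 0}) :=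
      (isOpen_openD d).inter (isOpen_ne_fun (affine_cont v) continuous_const)
    have hne : (openD d ∩ {x | v x ≠ 0}).Nonempty := by
      by_contra hcon
      apply hv
      apply AffineMap.ext_on (s := openD d)
        ((isOpen_openD d).affineSpan_eq_top (openD_nonempty d))
      intro x hx
      by_contra h
      exact hcon ⟨x, hx, h⟩
    refine (hopen.measure_pos volume hne).trans_le (measure_mono ?_)
    rintro x ⟨hx, hvx⟩
    refine ⟨?_, fun i => (hx.1 i).le, hx.2.le⟩
    have h1 : 0 < elemBubble d x :=
      mul_pos (sub_pos.2 hx.2) (Finset.prod_pos fun i _ => hx.1 i)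
    exact mul_ne_zero h1.ne' (pow_ne_zero 2 hvx)
  · filter_upwards [ae_restrict_mem (isClosed_Dstd d).measurableSet] with x hx
    exact mul_nonneg (mul_nonneg (sub_nonneg.2 hx.2) (Finset.prod_nonneg fun i _ => hx.1 i))
      (sq_nonneg _)

def projL (d : ℕ) (i : Fin d) : Euc d →ₗ[ℝ] ℝ := (EuclideanSpace.proj i : Euc d →L[ℝ] ℝ)

def baryA (d : ℕ) : Fin (d + 1) → (Euc d →ᵃ[ℝ] ℝ) :=
  Fin.cases (AffineMap.const ℝ _ 1 - (∑ i, projL d i).toAffineMap)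
    (fun i => (projL d i).toAffineMap)

lemma baryA_apply (d : ℕ) (j : Fin (d+1)) (x : Euc d) : baryA d j x = bary d j x := by
  refine Fin.cases ?_ (fun i => ?_) j
  · simp [baryA, bary, projL]
  · simp [baryA, bary, projL]

lemma sumA_apply {d : ℕ} (c : Fin (d+1) → ℝ) (x : Euc d) :
    (∑ j, c j • baryA d j) x = ∑ j, c j * bary d j x := by
  have h : ∀ s : Finset (Fin (d+1)), (∑ j ∈ s, c j • baryA d j) x = ∑ j ∈ s, c j * bary d j x := by
    intro s
    induction s using Finset.induction_on with
    | empty => simp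
    | insert a s ha ih =>
      rw [Finset.sum_insert ha, Finset.sum_insert ha, ← ih, ← baryA_apply]
      rfl
  exact h _

lemma affine_eq {d : ℕ} (p : Euc d →ᵃ[ℝ] ℝ) :
    ∃ c : Fin (d+1) → ℝ, p = ∑ j, c j • baryA d j := by
  refine ⟨Fin.cases (p 0) (fun i => p 0 + p.linear (EuclideanSpace.single i 1)), ?_⟩
  ext x
  have h1 : p x = p 0 + p.linear x := by
    have := p.map_vadd 0 x
    simpa [add_comm] using this
  have h2 : p.linear x = ∑ i, x i * p.linear (EuclideanSpace.single i 1) := by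
    conv_lhs => rw [← (EuclideanSpace.basisFun (Fin d) ℝ).sum_repr x]
    simp
  rw [sumA_apply, h1, h2, Fin.sum_univ_succ]
  simp only [Fin.cases_zero, Fin.cases_succ, bary, add_mul, Finset.sum_add_distrib,
    ← Finset.mul_sum]
  simp only [mul_comm]
  ring

lemma bary_cont (d : ℕ) (j : Fin (d+1)) : Continuous (bary d j) := by
  have := affine_cont (baryA d j)
  rwa [show (baryA d j : Euc d → ℝ) = bary d j from funext (baryA_apply d j)] at this

lemma integ (d : ℕ) (p : Euc d →ᵃ[ℝ] ℝ) (j : Fin (d+1)) :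
    IntegrableOn (fun x => elemBubble d x * p x * bary d j x) (Δstd d) :=
  integrable_of_cont d (((cont_bubble d).mul (affine_cont p)).mul (bary_cont d j))

def pairT (d : ℕ) : (Euc d →ᵃ[ℝ] ℝ) →ₗ[ℝ] (Fin (d+1) → ℝ) where
  toFun p j := ∫ x in Δstd d, elemBubble d x * p x * bary d j x
  map_add' p q := by
    funext j
    rw [Pi.add_apply, ← integral_add (integ d p j) (integ d q j)]
    congr 1
    funext x
    simp only [AffineMap.coe_add, Pi.add_apply]
    ring
  map_smul' c p := by
    funext j
    rw [Pi.smul_apply, RingHom.id_apply, smul_eq_mul, ← integral_const_mul]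
    congr 1
    funext x
    simp only [AffineMap.coe_smul, Pi.smul_apply, smul_eq_mul]
    ring

lemma pairT_inj (d : ℕ) : Function.Injective (pairT d) := by
  rw [injective_iff_map_eq_zero]
  intro p hp
  by_contra hne
  have hpos := bubble_pos p hne
  obtain ⟨c, hc⟩ := affine_eq p
  have h : ∫ x in Δstd d, elemBubble d x * (p x) ^ 2 = ∑ j, c j * pairT d p j := by
    have h1 : ∀ x, elemBubble d x * (p x) ^ 2
        = ∑ j, c j * (elemBubble d x * p x * bary d j x) := by
      intro x
      have h2 : p x = ∑ j, c j * bary d j x := by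
        rw [← sumA_apply, ← hc]
      rw [sq, ← mul_assoc]
      nth_rewrite 2 [h2]
      rw [Finset.mul_sum]
      exact Finset.sum_congr rfl fun j _ => by ring
    simp_rw [h1]
    rw [integral_finset_sum _ fun j _ => (integ d p j).const_mul (c j)]
    exact Finset.sum_congr rfl fun j _ => integral_const_mul _ _
  rw [h, hp] at hpos
  simp at hpos

def combL (d : ℕ) : (Fin (d+1) → ℝ) →ₗ[ℝ] (Euc d →ᵃ[ℝ] ℝ) where
  toFun c := ∑ j, c j • baryA d j
  map_add' a b := by simp [add_smul, Finset.sum_add_distrib]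
  map_smul' a b := by simp [mul_smul, Finset.smul_sum]

lemma combL_inj (d : ℕ) : Function.Injective (combL d) := by
  rw [injective_iff_map_eq_zero]
  intro c hc
  have h : ∀ x : Euc d, ∑ j, c j * bary d j x = 0 := by
    intro x
    rw [← sumA_apply]
    exact congrArg (fun f : Euc d →ᵃ[ℝ] ℝ => f x) hc
  have h0 : c 0 = 0 := by
    have := h 0
    simpa [Fin.sum_univ_succ, bary] using this
  funext j
  refine Fin.cases h0 (fun i => ?_) j
  have := h (EuclideanSpace.single i 1)
  simpa [Fin.sum_univ_succ, bary, h0] using this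

lemma pairT_surj (d : ℕ) : Function.Surjective (pairT d) := by
  have h : Function.Injective (pairT d ∘ₗ combL d) := by
    rw [LinearMap.coe_comp]
    exact (pairT_inj d).comp (combL_inj d)
  have h2 := LinearMap.injective_iff_surjective.1 h
  rw [LinearMap.coe_comp] at h2
  exact h2.of_comp

/-- the bubble-weighted pairing is an inner product on affine functions;
existence and uniqueness of the dual basis. The form `(p,q) ↦ ∫_Δ b p q` is positive
definite on affine functions, and there is a unique family of affine functions `ψᵢ` with
`∫_Δ b ψᵢ λⱼ = δᵢⱼ`; in particular `φ*ᵢ := ψᵢ b` satisfies `∫_Δ φ*ᵢ λⱼ = δᵢⱼ`. -/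
theorem bubble_dual_basis (d : ℕ) (hd : 1 ≤ d) :
    (∀ v : Euc d →ᵃ[ℝ] ℝ, v ≠ 0 → 0 < ∫ x in Δstd d, elemBubble d x * (v x) ^ 2) ∧
      (∃! ψ : Fin (d + 1) → (Euc d →ᵃ[ℝ] ℝ),
        ∀ i j, (∫ x in Δstd d, elemBubble d x * ψ i x * bary d j x)
          = if i = j then 1 else 0) := by
  refine ⟨fun v hv => bubble_pos v hv, ?_⟩
  choose ψ hψ using fun i : Fin (d+1) =>
    pairT_surj d (fun j => if i = j then (1:ℝ) else 0)
  refine ⟨ψ, fun i j => congrFun (hψ i) j, fun χ hχ => ?_⟩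
  funext i
  apply pairT_inj d
  rw [hψ i]
  funext j
  exact hχ i j
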